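/- Let Λ = KQ/I be an arbitrary basic finite-dimensional algebra over an algebraically closed field, d a dimension vector, and S any semisimple sequence of dimension vector d (realizable or not). Then Filt S is a Zariski-closed subset of Rep_d(Λ); in particular, the closure of Rep S is contained in Filt S. Consequently, the map Γ_• : Rep_d(Λ) → ℕ, x ↦ Γ(M_x), is upper semicontinuous. -/

import Mathlib

open Finset

/-! # Varieties of representations of a quiver with relations: basic setup -/

/-- The Zariski topology on the affine space `ι → K`: it is generated by the basic open
sets `D(p) = {x | p(x) ≠ 0}`, where `p` ranges over multivariate polynomials. -/
def zariskiTopology (ι K : Type) [CommSemiring K] : TopologicalSpace (ι → K) :=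
  TopologicalSpace.generateFrom
    {U | ∃ p : MvPolynomial ι K, U = {x | MvPolynomial.eval x p ≠ 0}}

/-- A finite quiver `Q`: vertices `Fin n`, arrows `Fin numArrows` with source and
target maps. -/
structure QuiverData where
  n : ℕ
  numArrows : ℕ
  src : Fin numArrows → Fin n
  tgt : Fin numArrows → Fin n

namespace QuiverData

variable (Q : QuiverData) (d : Fin Q.n → ℕ) (K : Type) [Field K]

/-- Index of the coordinates of the affine space of `d`-dimensional representations:
for each arrow `a` a matrix entry index in `Fin (d (tgt a)) × Fin (d (src a))`. -/
abbrev Coords := Σ a : Fin Q.numArrows, Fin (d (Q.tgt a)) × Fin (d (Q.src a))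

/-- The affine space of `d`-dimensional representations of `Q`:
a point `x` assigns to each arrow `a` a `d (tgt a) × d (src a)` matrix over `K`. -/
abbrev RepSpace := Coords Q d → K

/-- `RepSpace` carries the Zariski topology. -/
noncomputable instance instRepTop : TopologicalSpace (RepSpace Q d K) :=
  zariskiTopology (Coords Q d) K

/-- The underlying `K`-vector space `⊕ᵢ K^{dᵢ}` of any `d`-dimensional representation. -/
abbrev Carrier := (Σ i : Fin Q.n, Fin (d i)) → K

/-- The projection onto the component of the `i`-th vertex (action of the primitive
idempotent `eᵢ`). -/
def proj (i : Fin Q.n) : Carrier Q d K →ₗ[K] Carrier Q d K where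
  toFun m := fun jv => if jv.1 = i then m jv else 0
  map_add' u v := by
    funext jv; by_cases h : jv.1 = i <;> simp [h]
  map_smul' c u := by
    funext jv; by_cases h : jv.1 = i <;> simp [h]

/-- The action of the arrow `a` on the carrier space of the representation `x`. -/
noncomputable def arrowMap (x : RepSpace Q d K) (a : Fin Q.numArrows) :
    Carrier Q d K →ₗ[K] Carrier Q d K where
  toFun m := fun jv =>
    if h : jv.1 = Q.tgt a then
      ∑ w : Fin (d (Q.src a)), x ⟨a, (Fin.cast (congrArg d h) jv.2, w)⟩ * m ⟨Q.src a, w⟩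
    else 0
  map_add' u v := by
    funext jv
    by_cases h : jv.1 = Q.tgt a <;> simp [h, mul_add, Finset.sum_add_distrib]
  map_smul' c u := by
    funext jv
    by_cases h : jv.1 = Q.tgt a <;>
      simp [h, Finset.mul_sum, mul_comm, mul_left_comm, mul_assoc]

/-- The action of a word `w = [a_k, …, a_1]` of arrows on the representation `x`
(the arrow `a_1` acts first; non-composable words act as `0`). -/
noncomputable def wordMap (x : RepSpace Q d K) (w : List (Fin Q.numArrows)) :
    Module.End K (Carrier Q d K) :=
  (w.map fun a => (arrowMap Q d K x a : Module.End K (Carrier Q d K))).prod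

/-- The submodule `J^l · M_x` of the module `M_x`: the sum of the images of all words of
arrows of length `l` (for an admissible ideal, the radical acts through the arrows). -/
noncomputable def radPow (x : RepSpace Q d K) (l : ℕ) : Submodule K (Carrier Q d K) :=
  ⨆ w : {w : List (Fin Q.numArrows) // w.length = l},
    LinearMap.range (wordMap Q d K x w.1)

/-- The socle series of `M_x`: `socPow x l = soc_l(M_x)`. -/
noncomputable def socPow (x : RepSpace Q d K) : ℕ → Submodule K (Carrier Q d K)
  | 0 => ⨅ a, LinearMap.ker (arrowMap Q d K x a)
  | (l+1) => ⨅ a, (socPow x l).comap (arrowMap Q d K x a)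

/-- The dimension, at the vertex `i`, of a (vertex-graded) subspace `N`. -/
noncomputable def vdim (N : Submodule K (Carrier Q d K)) (i : Fin Q.n) : ℕ :=
  Module.finrank K (N.map (proj Q d K i))

/-- The radical layering `S(M_x) = (M/JM, JM/J²M, …, J^L M/J^{L+1} M)` of the module `M_x`,
recorded through the dimension vectors of its semisimple layers. -/
noncomputable def radLayering (L : ℕ) (x : RepSpace Q d K) :
    Fin (L+1) → Fin Q.n → ℕ :=
  fun l i => vdim Q d K (radPow Q d K x l) i - vdim Q d K (radPow Q d K x (l+1)) i

/-- The socle layering `S*(M_x) = (soc₀M, soc₁M/soc₀M, …)` of the module `M_x`, recorded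
through the dimension vectors of its semisimple layers. -/
noncomputable def socLayering (L : ℕ) (x : RepSpace Q d K) :
    Fin (L+1) → Fin Q.n → ℕ :=
  fun l i => vdim Q d K (socPow Q d K x l) i -
    (if (l : ℕ) = 0 then 0 else vdim Q d K (socPow Q d K x ((l : ℕ) - 1)) i)

end QuiverData

/-- The dominance order on semisimple sequences (recorded as sequences of dimension
vectors): `dominates S S'` means `S ≤ S'`, i.e. `⊕_{j≤l} S_j ⊆ ⊕_{j≤l} S'_j` for all `l`. -/
def dominates {n L : ℕ} (S S' : Fin (L+1) → Fin n → ℕ) : Prop :=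
  ∀ (l : Fin (L+1)) (i : Fin n),
    ∑ j ∈ Finset.univ.filter (fun j => j ≤ l), S j i ≤
      ∑ j ∈ Finset.univ.filter (fun j => j ≤ l), S' j i

/-- A semisimple sequence has dimension vector `d` if its layers' dimension vectors sum
to `d`. -/
def hasDimVec {n L : ℕ} (S : Fin (L+1) → Fin n → ℕ) (d : Fin n → ℕ) : Prop :=
  ∀ i, ∑ l, S l i = d i

namespace QuiverData

variable (Q : QuiverData) (d : Fin Q.n → ℕ) (K : Type) [Field K]

/-- Evaluation of a formal noncommutative polynomial in the vertices (`Sum.inl`) and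
arrows (`Sum.inr`) of `Q` on the representation `x`; an element of the path algebra `KQ`
is represented by such a polynomial. -/
noncomputable def evalRel (x : RepSpace Q d K) :
    FreeAlgebra K (Fin Q.n ⊕ Fin Q.numArrows) →ₐ[K] Module.End K (Carrier Q d K) :=
  FreeAlgebra.lift K
    (Sum.elim (fun i => (proj Q d K i : Module.End K (Carrier Q d K)))
      (fun a => (arrowMap Q d K x a : Module.End K (Carrier Q d K))))

/-- The affine variety `Rep_d(Λ)` for `Λ = KQ/I`, where the ideal `I` is generated by the
set `R` of relations: the set of points of `RepSpace` annihilating every relation. -/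
def RepVar (R : Set (FreeAlgebra K (Fin Q.n ⊕ Fin Q.numArrows))) :
    Set (RepSpace Q d K) :=
  {x | ∀ r ∈ R, evalRel Q d K x r = 0}

/-- The affine variety `Rep_d(Λ)` for the truncated path algebra
`Λ = KQ/⟨all paths of length L+1⟩`. -/
def TruncRepVar (L : ℕ) : Set (RepSpace Q d K) :=
  {x | ∀ w : List (Fin Q.numArrows), w.length = L + 1 → wordMap Q d K x w = 0}

/-- A submodule of `M_x`, i.e. a subspace stable under the arrows and the vertex
idempotents. -/
def Stable (x : RepSpace Q d K) (N : Submodule K (Carrier Q d K)) : Prop :=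
  (∀ a, N.map (arrowMap Q d K x a) ≤ N) ∧ ∀ i, N.map (proj Q d K i) ≤ N

/-- A submodule `N` of `M_x` is indecomposable (as a module). -/
def IndecompSub (x : RepSpace Q d K) (N : Submodule K (Carrier Q d K)) : Prop :=
  N ≠ ⊥ ∧ ∀ N₁ N₂ : Submodule K (Carrier Q d K),
    Stable Q d K x N₁ → Stable Q d K x N₂ → N₁ ≤ N → N₂ ≤ N →
    N₁ ⊔ N₂ = N → N₁ ⊓ N₂ = ⊥ → N₁ = ⊥ ∨ N₂ = ⊥

/-- The module `M_x` is indecomposable. -/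
def IndecompRep (x : RepSpace Q d K) : Prop :=
  IndecompSub Q d K x ⊤

/-- The module `M_x` is uniserial: its submodules form a chain. -/
def UniserialRep (x : RepSpace Q d K) : Prop :=
  ∀ N₁ N₂ : Submodule K (Carrier Q d K),
    Stable Q d K x N₁ → Stable Q d K x N₂ → N₁ ≤ N₂ ∨ N₂ ≤ N₁

/-- `M_x` decomposes as a direct sum of `s` indecomposable submodules whose dimension
vectors are `D 0, …, D (s-1)`. -/
def DecompWith (x : RepSpace Q d K) (s : ℕ) (D : Fin s → Fin Q.n → ℕ) : Prop :=
  ∃ N : Fin s → Submodule K (Carrier Q d K),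
    (∀ r, Stable Q d K x (N r)) ∧
    (∀ r, Disjoint (N r) (⨆ t, ⨆ (_ : t ≠ r), N t)) ∧
    (⨆ r, N r) = ⊤ ∧
    (∀ r, IndecompSub Q d K x (N r)) ∧
    ∀ r i, vdim Q d K (N r) i = D r i

/-- A homomorphism of representations `M_x → M_y` (for possibly different dimension
vectors): a linear map commuting with the arrow actions and the vertex projections. -/
def RepHom (dx dy : Fin Q.n → ℕ) (x : RepSpace Q dx K) (y : RepSpace Q dy K)
    (φ : Carrier Q dx K →ₗ[K] Carrier Q dy K) : Prop :=
  (∀ a, φ ∘ₗ arrowMap Q dx K x a = arrowMap Q dy K y a ∘ₗ φ) ∧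
  ∀ i, φ ∘ₗ proj Q dx K i = proj Q dy K i ∘ₗ φ

/-- The submodule `N` of `M_x` is isomorphic, as a representation, to `M_y`. -/
def SubrepIso (dy : Fin Q.n → ℕ) (x : RepSpace Q d K)
    (N : Submodule K (Carrier Q d K)) (y : RepSpace Q dy K) : Prop :=
  ∃ φ : Carrier Q d K →ₗ[K] Carrier Q dy K,
    N ⊓ LinearMap.ker φ = ⊥ ∧ N.map φ = ⊤ ∧
    (∀ a, ∀ m ∈ N, φ (arrowMap Q d K x a m) = arrowMap Q dy K y a (φ m)) ∧
    (∀ i, ∀ m ∈ N, φ (proj Q d K i m) = proj Q dy K i (φ m))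

/-- The representations `M_x` and `M_y` are isomorphic; the isomorphism classes are
exactly the orbits of the `GL(d)`-action. -/
def IsoRep (x y : RepSpace Q d K) : Prop :=
  ∃ φ : Carrier Q d K ≃ₗ[K] Carrier Q d K,
    (∀ a m, φ (arrowMap Q d K x a m) = arrowMap Q d K y a (φ m)) ∧
    ∀ i m, φ (proj Q d K i m) = proj Q d K i (φ m)

/-- The `GL(d)`-orbit of the point `x`, i.e. the set of points encoding modules
isomorphic to `M_x`. -/
def orbitSet (x : RepSpace Q d K) : Set (RepSpace Q d K) :=
  {y | IsoRep Q d K x y}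

/-- Given a family `P` of varieties `Rep_dv(Λ)` (one for every dimension vector `dv`),
`Ext¹_Λ(M_x, M_y) = 0`: every extension `0 → M_y → E → M_x → 0` of `Λ`-modules splits. -/
def Ext1Zero (P : ∀ dv : Fin Q.n → ℕ, Set (RepSpace Q dv K))
    (dx dy : Fin Q.n → ℕ) (x : RepSpace Q dx K) (y : RepSpace Q dy K) : Prop :=
  ∀ z ∈ P (fun i => dx i + dy i),
    ∀ (ι : Carrier Q dy K →ₗ[K] Carrier Q (fun i => dx i + dy i) K)
      (π : Carrier Q (fun i => dx i + dy i) K →ₗ[K] Carrier Q dx K),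
      RepHom Q K dy (fun i => dx i + dy i) y z ι →
      RepHom Q K (fun i => dx i + dy i) dx z x π →
      Function.Injective ι → Function.Surjective π →
      LinearMap.ker π = LinearMap.range ι →
      ∃ σ : Carrier Q dx K →ₗ[K] Carrier Q (fun i => dx i + dy i) K,
        RepHom Q K dx (fun i => dx i + dy i) x z σ ∧ π ∘ₗ σ = LinearMap.id

/-- The direct sum `C₁ ⊕ ⋯ ⊕ C_s` of subvarieties `C_r ⊆ Rep_{D r}(Λ)`: the set of
points `x ∈ Rep_d(Λ)` whose module decomposes as `M_x ≅ ⊕_r M^{(r)}` with `M^{(r)}`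
encoded by a point of `C_r`. -/
def DirectSumSet (s : ℕ) (D : Fin s → Fin Q.n → ℕ)
    (Cs : ∀ r : Fin s, Set (RepSpace Q (D r) K)) : Set (RepSpace Q d K) :=
  {x | ∃ N : Fin s → Submodule K (Carrier Q d K),
    (∀ r, Stable Q d K x (N r)) ∧
    (∀ r, Disjoint (N r) (⨆ t, ⨆ (_ : t ≠ r), N t)) ∧
    (⨆ r, N r) = ⊤ ∧
    ∀ r, ∃ y ∈ Cs r, SubrepIso Q d K (D r) x (N r) y}

/-- The endomorphism space `End_Λ(M_x)` of the module `M_x`. -/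
def endSpace (x : RepSpace Q d K) :
    Submodule K (Carrier Q d K →ₗ[K] Carrier Q d K) where
  carrier := {φ | RepHom Q K d d x x φ}
  add_mem' := by
    intro φ ψ hφ hψ
    exact ⟨fun a => by rw [LinearMap.add_comp, LinearMap.comp_add, hφ.1 a, hψ.1 a],
      fun i => by rw [LinearMap.add_comp, LinearMap.comp_add, hφ.2 i, hψ.2 i]⟩
  zero_mem' := by
    exact ⟨fun a => by simp, fun i => by simp⟩
  smul_mem' := by
    intro c φ hφ
    exact ⟨fun a => by rw [LinearMap.smul_comp, LinearMap.comp_smul, hφ.1 a],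
      fun i => by rw [LinearMap.smul_comp, LinearMap.comp_smul, hφ.2 i]⟩

/-- A word of arrows is a (composable) path when read in function-composition order. -/
def IsPathWord (w : List (Fin Q.numArrows)) : Prop :=
  List.Chain' (fun a b => Q.src a = Q.tgt b) w

/-- The quiver `Q` has no oriented cycles. -/
def Acyclic : Prop :=
  ∀ (a : Fin Q.numArrows) (w : List (Fin Q.numArrows)),
    IsPathWord Q (a :: w) →
      Q.tgt a ≠ Q.src ((a :: w).getLast (List.cons_ne_nil a w))

/-- A filtration `M_x = F 0 ⊇ F 1 ⊇ ⋯ ⊇ F (L+1) = 0` by submodules which is governed by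
the semisimple sequence `S`: each layer `F l / F (l+1)` is semisimple, isomorphic to `S l`. -/
def Governed (L : ℕ) (x : RepSpace Q d K) (S : Fin (L+1) → Fin Q.n → ℕ)
    (F : Fin (L+2) → Submodule K (Carrier Q d K)) : Prop :=
  F 0 = ⊤ ∧ F (Fin.last (L+1)) = ⊥ ∧
  (∀ l : Fin (L+1), F l.succ ≤ F l.castSucc) ∧
  (∀ (l : Fin (L+2)) (i : Fin Q.n), (F l).map (proj Q d K i) ≤ F l) ∧
  (∀ (l : Fin (L+1)) (a : Fin Q.numArrows),
      (F l.castSucc).map (arrowMap Q d K x a) ≤ F l.succ) ∧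
  ∀ (l : Fin (L+1)) (i : Fin Q.n),
      vdim Q d K (F l.castSucc) i = S l i + vdim Q d K (F l.succ) i

/-- `Filt S`: the set of points whose module has a filtration governed by `S`. -/
def FiltSet (L : ℕ) (S : Fin (L+1) → Fin Q.n → ℕ) : Set (RepSpace Q d K) :=
  {x | ∃ F, Governed Q d K L x S F}

/-- `Γ(M_x)`: the number of semisimple sequences which are realizable (i.e. occur as the
radical layering of a module in the variety `P`) and which govern some filtration of `M_x`. -/
noncomputable def gammaCount (L : ℕ) (P : Set (RepSpace Q d K))
    (x : RepSpace Q d K) : ℕ :=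
  Set.ncard {S : Fin (L+1) → Fin Q.n → ℕ |
    (∃ y ∈ P, radLayering Q d K L y = S) ∧ ∃ F, Governed Q d K L x S F}

/-- `Sstar` is the generic (= minimal, attained) socle layering of the modules in `W`. -/
def GenSoc (L : ℕ) (W : Set (RepSpace Q d K))
    (Sstar : Fin (L+1) → Fin Q.n → ℕ) : Prop :=
  (∀ x ∈ W, dominates Sstar (socLayering Q d K L x)) ∧
  ∃ x ∈ W, socLayering Q d K L x = Sstar

end QuiverData

namespace QuiverData

variable (Q : QuiverData)

/-- The `i`-th entry of the row vector `e·A` (over `ℤ`), where `A` is the adjacency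
matrix of `Q`: the sum of `e (src a)` over all arrows `a` ending at `i`. -/
def inflowZ (e : Fin Q.n → ℤ) (i : Fin Q.n) : ℤ :=
  ∑ a ∈ Finset.univ.filter (fun a => Q.tgt a = i), e (Q.src a)

/-- The `i`-th entry of the row vector `e·B` (over `ℤ`), where `B` is the transpose of
the adjacency matrix of `Q`. -/
def outflowZ (e : Fin Q.n → ℤ) (i : Fin Q.n) : ℤ :=
  ∑ a ∈ Finset.univ.filter (fun a => Q.src a = i), e (Q.tgt a)

/-- Partial sums `t⁽⁰⁾ + ⋯ + t⁽ˡ⁾` of the recursion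
`t⁽⁰⁾ = sup{0, d − d·A}`, `t⁽ˡ⁺¹⁾ = sup{0, (d − ∑_{k≤l} t⁽ᵏ⁾) − (d − ∑_{k≤l} t⁽ᵏ⁾)·A}`
(computed componentwise). -/
def cumLayer (dz : Fin Q.n → ℤ) : ℕ → Fin Q.n → ℤ
  | 0 => fun i => max 0 (dz i - inflowZ Q dz i)
  | (l+1) => fun i =>
      cumLayer dz l i +
        max 0 ((dz i - cumLayer dz l i) -
          inflowZ Q (fun j => dz j - cumLayer dz l j) i)

/-- The positive part `∑ᵢ eᵢ fᵢ` of the Euler form of `Q`. -/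
def eulerHomPart (e f : Fin Q.n → ℕ) : ℕ := ∑ i, e i * f i

/-- The negative part `∑_{α} e_{src α} f_{tgt α}` of the Euler form of `Q`, so that
`⟨e, f⟩ = eulerHomPart e f − eulerExtPart e f`. -/
def eulerExtPart (e f : Fin Q.n → ℕ) : ℕ :=
  ∑ a, e (Q.src a) * f (Q.tgt a)

end QuiverData

/-- The quiver with a single vertex and `r` loops. -/
def QuiverData.loopQuiver (r : ℕ) : QuiverData :=
  ⟨1, r, fun _ => 0, fun _ => 0⟩

namespace QuiverData

variable (Q : QuiverData) (d : Fin Q.n → ℕ) (K : Type) [Field K]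

/-- The variety `Rep_d(Λ)` for `Λ = KQ/⟨Rels⟩`, regarded as a topological space with the
(subspace) Zariski topology. -/
abbrev GenV (Rels : Set (FreeAlgebra K (Fin Q.n ⊕ Fin Q.numArrows))) :=
  {y : RepSpace Q d K // y ∈ RepVar Q d K Rels}

/-- The variety `Rep_d(Λ)` for the truncated path algebra
`Λ = KQ/⟨paths of length L+1⟩`, regarded as a topological space. -/
abbrev TruncV (L : ℕ) := {y : RepSpace Q d K // y ∈ TruncRepVar Q d K L}

end QuiverData


/-! ### Algebraic core: flags over valuation rings -/

theorem tri_aux {F : Type} [Field F] (V : ValuationSubring F) (n : ℕ)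
    (g : Matrix (Fin n) (Fin n) F) (k : ℕ) :
    ∃ u u' : Matrix (Fin n) (Fin n) V, u * u' = 1 ∧
      ∀ i j : Fin n, (j : ℕ) < k → j < i → (u.map V.subtype * g) i j = 0 := by
  classical
  induction k with
  | zero => exact ⟨1, 1, by simp, by simp⟩
  | succ k ih =>
    obtain ⟨u, u', huu, hz⟩ := ih
    by_cases hk : k < n
    swap
    · exact ⟨u, u', huu, fun i j _ hji => hz i j (by omega) hji⟩
    set M := u.map V.subtype * g with hM
    let kk : Fin n := ⟨k, hk⟩
    obtain ⟨p, hp, hmax⟩ := Finset.exists_max_image (Finset.univ.filter (fun i => kk ≤ i))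
      (fun i => V.valuation (M i kk)) ⟨kk, by simp⟩
    simp only [Finset.mem_filter, Finset.mem_univ, true_and] at hp hmax
    let σ : Equiv.Perm (Fin n) := Equiv.swap kk p
    have hσk : σ kk = p := Equiv.swap_apply_left _ _
    have hσge : ∀ i, kk ≤ i → kk ≤ σ i := by
      intro i hi
      by_cases h1 : i = kk
      · rw [h1, hσk]; exact hp
      by_cases h2 : i = p
      · rw [h2]; simp [σ]
      · rw [Equiv.swap_apply_of_ne_of_ne h1 h2]; exact hi
    have htV : ∀ i, kk < i → M (σ i) kk / M p kk ∈ V := by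
      intro i hi
      rw [← V.valuation_le_one_iff, map_div₀]
      exact div_le_one_of_le₀ (hmax _ (hσge i hi.le)) zero_le
    let t : Fin n → V := fun i => if h : kk < i then ⟨M (σ i) kk / M p kk, htV i h⟩ else 0
    let e : Fin n → V := Pi.single kk 1
    let N : Matrix (Fin n) (Fin n) V := Matrix.vecMulVec t e
    have hNN : N * N = 0 := by
      have : e ⬝ᵥ t = 0 := by simp [e, t]
      simp only [N, Matrix.vecMulVec_mul_vecMulVec, this]
      simp
    have hP : ∀ {R : Type} [CommRing R] (A : Matrix (Fin n) (Fin n) R),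
        σ.permMatrix R * A = A.submatrix σ id := by
      intro R _ A
      ext i j
      simp [Equiv.Perm.permMatrix, PEquiv.toMatrix_toPEquiv_mul]
    refine ⟨(1 - N) * (σ.permMatrix V * u), u' * (σ⁻¹.permMatrix V) * (1 + N), ?_, ?_⟩
    · have h1 : σ.permMatrix V * σ⁻¹.permMatrix V = 1 := by
        rw [hP]; ext i j
        simp [Equiv.Perm.permMatrix, PEquiv.toMatrix_apply, Matrix.one_apply, Equiv.toPEquiv_apply]
      calc _ = (1 - N) * (σ.permMatrix V * (u * u') * σ⁻¹.permMatrix V) * (1 + N) := by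
            simp only [Matrix.mul_assoc]
        _ = 1 - N * N := by rw [huu, Matrix.mul_one, h1]; noncomm_ring
        _ = 1 := by rw [hNN, sub_zero]
    · have key : ∀ i j, (((1 - N) * (σ.permMatrix V * u)).map V.subtype * g) i j
          = M (σ i) j - (t i : F) * M p j := by
        intro i j
        have e1 : ((1 - N) * (σ.permMatrix V * u)).map V.subtype * g
            = M.submatrix σ id - (N.map V.subtype) * M.submatrix σ id := by
          rw [hP, Matrix.map_mul, Matrix.map_sub _ (by simp), Matrix.map_one _ (by simp) (by simp),
            Matrix.mul_assoc]
          have : (u.submatrix σ id).map V.subtype * g = M.submatrix σ id := by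
            ext i j; simp [hM, Matrix.mul_apply]
          rw [this, Matrix.sub_mul, Matrix.one_mul]
        rw [e1, Matrix.sub_apply, Matrix.submatrix_apply, id]
        congr 1
        rw [Matrix.mul_apply, Finset.sum_eq_single kk]
        · simp [N, e, Matrix.vecMulVec_apply, hσk]
        · intro b _ hb
          simp [N, e, Matrix.vecMulVec_apply, hb]
        · simp
      intro i j hj hji
      rw [key]
      rcases Nat.lt_succ_iff_lt_or_eq.mp hj with h | h
      · have hMz : ∀ r, kk ≤ r → M r j = 0 := fun r hr =>
          hz r j h (lt_of_lt_of_le (Fin.lt_def.mpr h) hr)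
        by_cases hi : kk ≤ i
        · rw [hMz _ (hσge i hi), hMz p hp]; simp
        · have hti : t i = 0 := by simp only [t]; rw [dif_neg]; exact fun h => hi h.le
          have hσi : σ i = i := by
            apply Equiv.swap_apply_of_ne_of_ne
            · rintro rfl; exact hi le_rfl
            · rintro rfl; exact hi hp
          rw [hti, hσi, hz i j h hji]; simp
      · have hjk : j = kk := Fin.ext h
        subst hjk
        have hti : (t i : F) = M (σ i) kk / M p kk := by simp only [t]; rw [dif_pos hji]
        rw [hti]
        by_cases h0 : M p kk = 0
        · have := hmax (σ i) (hσge i hji.le)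
          rw [h0, map_zero, le_zero_iff, map_eq_zero] at this
          rw [this, h0]; simp
        · rw [div_mul_cancel₀ _ h0, sub_self]

/-- Iwasawa-type decomposition relative to a level function. -/
theorem tri_level {F : Type} [Field F] (V : ValuationSubring F) (n : ℕ)
    (g : Matrix (Fin n) (Fin n) F) (lam : Fin n → ℕ) :
    ∃ u u' : Matrix (Fin n) (Fin n) V, u * u' = 1 ∧
      ∀ i j : Fin n, lam i < lam j → (u.map V.subtype * g) i j = 0 := by
  classical
  let τ : Equiv.Perm (Fin n) := Tuple.sort (fun i => OrderDual.toDual (lam i))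
  have hτ : Monotone ((fun i => OrderDual.toDual (lam i)) ∘ τ) := Tuple.monotone_sort _
  obtain ⟨u, u', huu, hz⟩ := tri_aux V n (g.submatrix τ τ) n
  refine ⟨u.submatrix τ.symm τ.symm, u'.submatrix τ.symm τ.symm, ?_, ?_⟩
  · rw [Matrix.submatrix_mul_equiv, huu]; simp
  · intro i j hij
    have := hz (τ.symm i) (τ.symm j) (Fin.is_lt _) ?_
    · have e : (u.submatrix τ.symm τ.symm).map V.subtype
          = (u.map V.subtype).submatrix τ.symm τ.symm := rfl
      rw [e]
      have e2 : g = (g.submatrix τ τ).submatrix τ.symm τ.symm := by ext; simp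
      rw [e2, Matrix.submatrix_mul_equiv]
      exact this
    · by_contra hcon
      have := hτ (not_lt.mp hcon)
      simp at this
      omega

namespace QuiverData

/-- Existence of an adapted frame over a commutative ring. -/
def AdaptedFrame (Q : QuiverData) (d : Fin Q.n → ℕ) (lam : ∀ i, Fin (d i) → ℕ)
    (R : Type) [CommRing R]
    (x : ∀ a, Matrix (Fin (d (Q.tgt a))) (Fin (d (Q.src a))) R) : Prop :=
  ∃ g h : ∀ i, Matrix (Fin (d i)) (Fin (d i)) R, (∀ i, g i * h i = 1) ∧
    ∀ a v w, lam _ v ≤ lam _ w → (h (Q.tgt a) * x a * g (Q.src a)) v w = 0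

variable {Q : QuiverData} {d : Fin Q.n → ℕ} {lam : ∀ i, Fin (d i) → ℕ}

theorem AdaptedFrame.map {R R' : Type} [CommRing R] [CommRing R'] (f : R →+* R')
    {x : ∀ a, Matrix (Fin (d (Q.tgt a))) (Fin (d (Q.src a))) R}
    (hx : AdaptedFrame Q d lam R x) :
    AdaptedFrame Q d lam R' (fun a => (x a).map f) := by
  obtain ⟨g, h, hgh, hz⟩ := hx
  refine ⟨fun i => (g i).map f, fun i => (h i).map f, fun i => ?_, fun a v w hvw => ?_⟩
  · rw [← Matrix.map_mul, hgh, Matrix.map_one _ (map_zero f) (map_one f)]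
  · rw [← Matrix.map_mul, ← Matrix.map_mul, Matrix.map_apply, hz a v w hvw, map_zero]

theorem AdaptedFrame.valuation {F : Type} [Field F] (V : ValuationSubring F)
    {x : ∀ a, Matrix (Fin (d (Q.tgt a))) (Fin (d (Q.src a))) V}
    (hx : AdaptedFrame Q d lam F (fun a => (x a).map V.subtype)) :
    AdaptedFrame Q d lam V x := by
  obtain ⟨g, h, hgh, hz⟩ := hx
  choose u u' huu htri using fun i => tri_level V (d i) (g i) (lam i)
  refine ⟨u', u, fun i => mul_eq_one_comm.mp (huu i), fun a v w hvw => ?_⟩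
  have hU : ∀ i, (u i).map V.subtype * (u' i).map V.subtype = 1 := fun i => by
    rw [← Matrix.map_mul, huu, Matrix.map_one _ (map_zero _) (map_one _)]
  have hU' : ∀ i, (u' i).map V.subtype * (u i).map V.subtype = 1 := fun i =>
    mul_eq_one_comm.mp (hU i)
  set b : ∀ i, Matrix (Fin (d i)) (Fin (d i)) F := fun i => (u i).map V.subtype * g i with hb
  set c : ∀ i, Matrix (Fin (d i)) (Fin (d i)) F := fun i => h i * (u' i).map V.subtype with hc
  have hbc : ∀ i, b i * c i = 1 := fun i => by
    simp only [hb, hc]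
    calc _ = (u i).map V.subtype * (g i * h i) * (u' i).map V.subtype := by
          simp only [Matrix.mul_assoc]
      _ = 1 := by rw [hgh, Matrix.mul_one, hU]
  have hctri : ∀ i v w, lam i v < lam i w → c i v w = 0 := by
    intro i
    have hbt : (b i).BlockTriangular (fun v => OrderDual.toDual (lam i v)) := by
      intro v w hvw
      exact htri i v w hvw
    have hinv : c i = (b i)⁻¹ := (Matrix.inv_eq_right_inv (hbc i)).symm
    have : Invertible (b i) := ⟨c i, mul_eq_one_comm.mp (hbc i), hbc i⟩
    have := Matrix.blockTriangular_inv_of_blockTriangular hbt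
    rw [hinv]
    intro v w hvw
    exact this hvw
  have hmain : (u (Q.tgt a) * x a * u' (Q.src a)).map V.subtype
      = b (Q.tgt a) * (h (Q.tgt a) * (x a).map V.subtype * g (Q.src a)) * c (Q.src a) := by
    rw [Matrix.map_mul, Matrix.map_mul]
    simp only [hb, hc]
    symm
    calc _ = (u (Q.tgt a)).map V.subtype * (g (Q.tgt a) * h (Q.tgt a)) * (x a).map V.subtype *
          (g (Q.src a) * h (Q.src a)) *
          (u' (Q.src a)).map V.subtype := by simp only [Matrix.mul_assoc]
      _ = _ := by
        rw [hgh (Q.tgt a), hgh (Q.src a), Matrix.mul_one, Matrix.mul_one]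
  have : ((u (Q.tgt a) * x a * u' (Q.src a)).map V.subtype) v w = 0 := by
    rw [hmain, Matrix.mul_apply]
    refine Finset.sum_eq_zero fun w' _ => ?_
    by_cases h1 : lam _ w' < lam _ w
    · rw [hctri _ _ _ h1, mul_zero]
    · rw [Matrix.mul_apply, Finset.sum_eq_zero, zero_mul]
      intro v' _
      by_cases h2 : lam _ v < lam _ v'
      · rw [show b (Q.tgt a) v v' = 0 from htri _ _ _ h2, zero_mul]
      · rw [hz a v' w' (by omega), mul_zero]
  rw [Matrix.map_apply] at this
  exact Subtype.ext this

theorem AdaptedFrame.descend {K k : Type} [Field K] [IsAlgClosed K] [Field k] [Algebra K k]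
    {x : ∀ a, Matrix (Fin (d (Q.tgt a))) (Fin (d (Q.src a))) K}
    (hx : AdaptedFrame Q d lam k (fun a => (x a).map (algebraMap K k))) :
    AdaptedFrame Q d lam K x := by
  classical
  obtain ⟨g, h, hgh, hz⟩ := hx
  let s : Set k := Set.range (fun p : Σ i, Fin (d i) × Fin (d i) => g p.1 p.2.1 p.2.2) ∪
    Set.range (fun p : Σ i, Fin (d i) × Fin (d i) => h p.1 p.2.1 p.2.2)
  have hs : s.Finite := (Set.finite_range _).union (Set.finite_range _)
  let D : Subalgebra K k := Algebra.adjoin K s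
  have hfg : Algebra.FiniteType K D := by
    rw [← Subalgebra.fg_iff_finiteType]
    exact ⟨hs.toFinset, by simp [D]⟩
  have hg : ∀ i v w, g i v w ∈ D := fun i v w =>
    Algebra.subset_adjoin (Or.inl ⟨⟨i, v, w⟩, rfl⟩)
  have hh : ∀ i v w, h i v w ∈ D := fun i v w =>
    Algebra.subset_adjoin (Or.inr ⟨⟨i, v, w⟩, rfl⟩)
  have hD : AdaptedFrame Q d lam D (fun a => (x a).map (algebraMap K D)) := by
    let ι : D →+* k := D.val.toRingHom
    have hι : Function.Injective ι := Subtype.val_injective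
    refine ⟨fun i => Matrix.of fun v w => ⟨g i v w, hg i v w⟩,
      fun i => Matrix.of fun v w => ⟨h i v w, hh i v w⟩, fun i => ?_, fun a v w hvw => ?_⟩
    · apply Matrix.map_injective hι
      beta_reduce
      rw [Matrix.map_mul, Matrix.map_one _ (map_zero _) (map_one _)]
      exact hgh i
    · apply hι
      rw [← Matrix.map_apply (f := ι), Matrix.map_mul, Matrix.map_mul, map_zero]
      exact hz a v w hvw
  obtain ⟨m, hm⟩ := Ideal.exists_maximal D
  let : Field (D ⧸ m) := Ideal.Quotient.field m
  have : Algebra.FiniteType K (D ⧸ m) := inferInstance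
  have : Module.Finite K (D ⧸ m) := finite_of_finite_type_of_isJacobsonRing K (D ⧸ m)
  have hbij : Function.Bijective (algebraMap K (D ⧸ m)) :=
    IsAlgClosed.algebraMap_bijective_of_isIntegral
  let eqv := RingEquiv.ofBijective _ hbij
  have := (hD.map (Ideal.Quotient.mk m)).map eqv.symm.toRingHom
  convert this using 2 with a
  ext v w
  simp only [Matrix.map_apply]
  change x a v w = eqv.symm (algebraMap K (D ⧸ m) (x a v w))
  exact (eqv.symm_apply_apply _).symm

end QuiverData

/-! ### Closedness of the locus of points with an adapted frame -/

namespace QuiverData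

/-- The matrices of a point. -/
def ptMat (Q : QuiverData) (d : Fin Q.n → ℕ) {R : Type} (x : Coords Q d → R) (a : Fin Q.numArrows) :
    Matrix (Fin (d (Q.tgt a))) (Fin (d (Q.src a))) R :=
  Matrix.of fun v w => x ⟨a, (v, w)⟩

theorem isClosed_of_poly {ι K : Type} [Field K] (Φ : Set (ι → K))
    (H : ∀ x0, (∀ p : MvPolynomial ι K, (∀ x ∈ Φ, MvPolynomial.eval x p = 0) →
      MvPolynomial.eval x0 p = 0) → x0 ∈ Φ) :
    @IsClosed _ (zariskiTopology ι K) Φ := by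
  let := zariskiTopology ι K
  rw [← isOpen_compl_iff]
  have : Φᶜ = ⋃₀ {U | (∃ p : MvPolynomial ι K, U = {x | MvPolynomial.eval x p ≠ 0}) ∧ U ⊆ Φᶜ} := by
    apply Set.Subset.antisymm
    · intro x0 hx0
      have := mt (H x0) hx0
      push Not at this
      obtain ⟨p, hp, hp0⟩ := this
      refine ⟨_, ⟨⟨p, rfl⟩, ?_⟩, hp0⟩
      intro x hx hxΦ
      exact hx (hp x hxΦ)
    · intro x ⟨U, ⟨_, hU⟩, hx⟩
      exact hU hx
  rw [this]
  apply isOpen_sUnion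
  rintro U ⟨hU, _⟩
  exact TopologicalSpace.isOpen_generateFrom_of_mem hU

theorem AdaptedFrame.pi {Q : QuiverData} {d : Fin Q.n → ℕ} {lam : ∀ i, Fin (d i) → ℕ}
    {X K : Type} [CommRing K]
    (x : ∀ a, Matrix (Fin (d (Q.tgt a))) (Fin (d (Q.src a))) (X → K))
    (H : ∀ t : X, AdaptedFrame Q d lam K (fun a => (x a).map (Pi.evalRingHom (fun _ => K) t))) :
    AdaptedFrame Q d lam (X → K) x := by
  choose g h hgh hz using H
  let G : ∀ i, Matrix (Fin (d i)) (Fin (d i)) (X → K) := fun i => Matrix.of fun v w t => g t i v w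
  let G' : ∀ i, Matrix (Fin (d i)) (Fin (d i)) (X → K) := fun i => Matrix.of fun v w t => h t i v w
  refine ⟨G, G', fun i => ?_, fun a v w hvw => ?_⟩
  · have key : ∀ t, (G i * G' i).map (Pi.evalRingHom (fun _ => K) t)
        = (1 : Matrix (Fin (d i)) (Fin (d i)) (X → K)).map (Pi.evalRingHom (fun _ => K) t) := by
      intro t
      rw [Matrix.map_mul, Matrix.map_one _ (map_zero _) (map_one _)]
      exact hgh t i
    ext v w t
    exact congrFun (congrFun (key t) v) w
  · have key : ∀ t, ((G' (Q.tgt a) * x a * G (Q.src a)).map (Pi.evalRingHom (fun _ => K) t)) v w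
        = 0 := by
      intro t
      rw [Matrix.map_mul, Matrix.map_mul]
      exact hz t a v w hvw
    exact funext key

theorem AdaptedFrame.congr {Q : QuiverData} {d : Fin Q.n → ℕ} {lam : ∀ i, Fin (d i) → ℕ}
    {R : Type} [CommRing R]
    {x y : ∀ a, Matrix (Fin (d (Q.tgt a))) (Fin (d (Q.src a))) R}
    (hx : AdaptedFrame Q d lam R x) (h : ∀ a v w, x a v w = y a v w) :
    AdaptedFrame Q d lam R y := by
  have : x = y := funext fun a => Matrix.ext (h a)
  exact this ▸ hx

theorem exists_valuation {C F : Type} [CommRing C] [Field F] (f : C →+* F) (m0 : Ideal C)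
    (hm0 : m0 ≠ ⊤) (hf : ∀ p, f p = 0 → p ∈ m0) :
    ∃ (V : ValuationSubring F) (f' : C →+* V), (∀ p, (f' p : F) = f p) ∧
      ∀ p ∈ m0, f' p ∈ IsLocalRing.maximalIdeal V := by
  let I : Ideal f.range := m0.map f.rangeRestrict
  have hI : ∀ p : C, f.rangeRestrict p ∈ I → p ∈ m0 := by
    intro p hp
    obtain ⟨q, hq, hqp⟩ := (Ideal.mem_map_iff_of_surjective _ f.rangeRestrict_surjective).mp hp
    have : f (p - q) = 0 := by
      rw [map_sub, sub_eq_zero]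
      exact (congrArg Subtype.val hqp).symm
    have := m0.add_mem (hf _ this) hq
    simpa using this
  have hItop : I ≠ ⊤ := by
    intro h
    apply hm0
    rw [Ideal.eq_top_iff_one]
    apply hI
    rw [h]; trivial
  obtain ⟨V, hAV, hIV⟩ := Ideal.image_subset_nonunits_valuationSubring I hItop
  let f' : C →+* V := f.codRestrict V.toSubring fun p => hAV ⟨p, rfl⟩
  refine ⟨V, f', fun p => rfl, fun p hp => ?_⟩
  have h1 : f p ∈ V.nonunits := hIV ⟨f.rangeRestrict p, Ideal.mem_map_of_mem _ hp, rfl⟩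
  exact (V.mem_nonunits_iff_exists_mem_maximalIdeal.mp h1).2

theorem adapted_closed {Q : QuiverData} {d : Fin Q.n → ℕ} (lam : ∀ i, Fin (d i) → ℕ)
    {K : Type} [Field K] [IsAlgClosed K] :
    IsClosed {x : RepSpace Q d K | AdaptedFrame Q d lam K (ptMat Q d x)} := by
  classical
  apply isClosed_of_poly
  intro x0 H
  set Φ := {x : RepSpace Q d K | AdaptedFrame Q d lam K (ptMat Q d x)} with hΦ
  let C := MvPolynomial (Coords Q d) K
  let B := Φ → K
  let φ : C →+* B := RingHom.pi fun x : Φ => MvPolynomial.eval x.1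
  let m0 : Ideal C := RingHom.ker (MvPolynomial.eval x0)
  have hm0 : m0.IsPrime := RingHom.ker_isPrime _
  have hker : ∀ p : C, φ p = 0 → p ∈ m0 := by
    intro p hp
    refine H p fun x hx => ?_
    exact congrFun hp ⟨x, hx⟩
  -- the universal point over `B`
  have hB : AdaptedFrame Q d lam B (fun a => (ptMat Q d (MvPolynomial.X (R := K))  a).map φ) := by
    apply AdaptedFrame.pi
    intro x
    refine AdaptedFrame.congr x.2 fun a v w => ?_
    change x.1 ⟨a, (v, w)⟩ = MvPolynomial.eval x.1 (MvPolynomial.X ⟨a, (v, w)⟩)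
    simp
  -- a prime of `B` lying below `m0`
  obtain ⟨P, hP, -, hdisj⟩ := Ideal.exists_le_prime_disjoint (⊥ : Ideal B)
    (m0.primeCompl.map φ) (by
      rw [Set.disjoint_left]
      rintro y hy ⟨p, hp, rfl⟩
      exact hp (hker p (by simpa using hy)))
  let F := FractionRing (B ⧸ P)
  let ψ : B →+* F := (algebraMap (B ⧸ P) F).comp (Ideal.Quotient.mk P)
  have hψ : ∀ b, ψ b = 0 → b ∈ P := by
    intro b hb
    rw [← Ideal.Quotient.eq_zero_iff_mem]
    exact IsFractionRing.injective (B ⧸ P) F (by rw [map_zero]; exact hb)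
  let f : C →+* F := ψ.comp φ
  have hf : ∀ p, f p = 0 → p ∈ m0 := by
    intro p hp
    by_contra hcon
    exact Set.disjoint_left.mp hdisj (hψ _ hp) ⟨p, hcon, rfl⟩
  have hF : AdaptedFrame Q d lam F (fun a => (ptMat Q d (MvPolynomial.X (R := K)) a).map f) := hB.map ψ
  obtain ⟨V, f', hff', hmax⟩ := exists_valuation f m0 hm0.ne_top hf
  have hV : AdaptedFrame Q d lam V (fun a => (ptMat Q d (MvPolynomial.X (R := K)) a).map f') := by
    apply AdaptedFrame.valuation V
    exact AdaptedFrame.congr hF fun a v w => (hff' _).symm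
  let k := IsLocalRing.ResidueField V
  let r : C →+* k := (IsLocalRing.residue V).comp f'
  have hr : ∀ p ∈ m0, r p = 0 := by
    intro p hp
    change IsLocalRing.residue V (f' p) = 0
    rw [IsLocalRing.residue_eq_zero_iff]
    exact hmax p hp
  have hk := hV.map (IsLocalRing.residue V)
  let : Algebra K k := (r.comp MvPolynomial.C).toAlgebra
  refine AdaptedFrame.descend (k := k) ?_
  refine AdaptedFrame.congr hk fun a v w => ?_
  change r (MvPolynomial.X ⟨a, (v, w)⟩) = r (MvPolynomial.C (x0 ⟨a, (v, w)⟩))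
  rw [← sub_eq_zero, ← map_sub]
  apply hr
  change MvPolynomial.eval x0 _ = 0
  simp

end QuiverData

/-! ### Filtrations versus adapted frames -/

theorem adapted_basis {K : Type} [Field K] {n L : ℕ} (W : Fin (L + 2) → Submodule K (Fin n → K))
    (s : Fin (L + 1) → ℕ) (h0 : W 0 = ⊤) (hlast : W (Fin.last (L + 1)) = ⊥)
    (hle : ∀ l : Fin (L + 1), W l.succ ≤ W l.castSucc)
    (hdim : ∀ l : Fin (L + 1), Module.finrank K (W l.castSucc) = s l + Module.finrank K (W l.succ))
    (e : (Σ l : Fin (L + 1), Fin (s l)) ≃ Fin n) :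
    ∃ b : Module.Basis (Fin n) K (Fin n → K), (∀ w, b w ∈ W (e.symm w).1.castSucc) ∧
      ∀ (l : Fin (L + 2)) (m) (_ : m ∈ W l) (v), ((e.symm v).1 : ℕ) < l → b.repr m v = 0 := by
  classical
  have step : ∀ l : Fin (L + 1), ∃ c : Fin (s l) → (Fin n → K), (∀ k, c k ∈ W l.castSucc) ∧
      W l.castSucc ≤ Submodule.span K (Set.range c) ⊔ W l.succ := by
    intro l
    obtain ⟨C, hC⟩ := Submodule.exists_isCompl ((W l.succ).comap (W l.castSucc).subtype)
    have hfin : Module.finrank K C = s l := by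
      have h1 := Submodule.finrank_add_eq_of_isCompl hC
      have h2 : Module.finrank K ((W l.succ).comap (W l.castSucc).subtype)
          = Module.finrank K (W l.succ) :=
        (Submodule.comapSubtypeEquivOfLe (hle l)).finrank_eq
      have := hdim l
      omega
    have : Module.Free K C := Module.Free.of_divisionRing K C
    let bC := Module.finBasisOfFinrankEq K C hfin
    refine ⟨fun k => ((bC k : W l.castSucc) : Fin n → K), fun k => (bC k : W l.castSucc).2, ?_⟩
    intro m hm
    have hmt : (⟨m, hm⟩ : W l.castSucc) ∈ (W l.succ).comap (W l.castSucc).subtype ⊔ C := by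
      rw [hC.sup_eq_top]; trivial
    obtain ⟨y, hy, z, hz, hyz⟩ := Submodule.mem_sup.mp hmt
    have hm' : m = (z : Fin n → K) + y := by
      rw [add_comm]; exact (congrArg Subtype.val hyz).symm
    rw [hm']
    refine Submodule.add_mem_sup ?_ hy
    have hzspan : (⟨z, hz⟩ : C) ∈ Submodule.span K (Set.range bC) := by
      rw [bC.span_eq]; trivial
    have := Submodule.mem_map_of_mem (f := (W l.castSucc).subtype ∘ₗ C.subtype) hzspan
    rw [Submodule.map_span, ← Set.range_comp] at this
    exact this
  choose c hcW hcs using step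
  let b0 : Fin n → (Fin n → K) := fun w => c (e.symm w).1 (e.symm w).2
  have hspan : ∀ l : Fin (L + 2), W l ≤ Submodule.span K (b0 '' {v | (l : ℕ) ≤ (e.symm v).1}) := by
    intro l
    induction l using Fin.reverseInduction with
    | last => rw [hlast]; exact bot_le
    | cast l ih =>
      refine (hcs l).trans (sup_le ?_ (ih.trans ?_))
      · apply Submodule.span_mono
        rintro _ ⟨k, rfl⟩
        refine ⟨e ⟨l, k⟩, by simp, ?_⟩
        change c (e.symm (e ⟨l, k⟩)).1 (e.symm (e ⟨l, k⟩)).2 = c l k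
        rw [e.symm_apply_apply]
      · apply Submodule.span_mono
        apply Set.image_mono
        intro v hv
        simp only [Set.mem_ofPred_eq, Fin.val_succ, Fin.val_castSucc] at hv ⊢
        omega
  have htop : ⊤ ≤ Submodule.span K (Set.range b0) := by
    rw [← h0]
    exact (hspan 0).trans (Submodule.span_mono (Set.image_subset_range _ _))
  let b := basisOfTopLeSpanOfCardEqFinrank b0 htop (by simp)
  have hb : ⇑b = b0 := coe_basisOfTopLeSpanOfCardEqFinrank _ _ _
  refine ⟨b, fun w => ?_, fun l m hm v hv => ?_⟩
  · rw [hb]; exact hcW _ _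
  · have h1 := hspan l hm
    rw [← hb, b.mem_span_image] at h1
    by_contra hne
    have := h1 (Finsupp.mem_support_iff.mpr hne)
    simp only [Set.mem_ofPred_eq] at this
    omega

namespace QuiverData

section frames

variable {Q : QuiverData} {d : Fin Q.n → ℕ} {K : Type} [Field K]

/-- Component at a vertex. -/
def vcomp (Q : QuiverData) (d : Fin Q.n → ℕ) (K : Type) [Field K] (i : Fin Q.n) :
    Carrier Q d K →ₗ[K] (Fin (d i) → K) :=
  LinearMap.funLeft K K (fun v => ⟨i, v⟩)

/-- Inclusion of the component at a vertex. -/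
def vincl (Q : QuiverData) (d : Fin Q.n → ℕ) (K : Type) [Field K] (i : Fin Q.n) :
    (Fin (d i) → K) →ₗ[K] Carrier Q d K where
  toFun u := fun jv => if h : jv.1 = i then u (Fin.cast (congrArg d h) jv.2) else 0
  map_add' u v := by
    funext jv; by_cases h : jv.1 = i <;> simp [h]
  map_smul' c u := by
    funext jv; by_cases h : jv.1 = i <;> simp [h]

theorem vcomp_vincl (i : Fin Q.n) (u) : vcomp Q d K i (vincl Q d K i u) = u := by
  funext v; simp [vcomp, vincl, LinearMap.funLeft_apply]

theorem vcomp_vincl_ne {i j : Fin Q.n} (h : j ≠ i) (u) :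
    vcomp Q d K j (vincl Q d K i u) = 0 := by
  funext v; simp [vcomp, vincl, LinearMap.funLeft_apply, h]

theorem vincl_vcomp (i : Fin Q.n) (m) : vincl Q d K i (vcomp Q d K i m) = proj Q d K i m := by
  funext ⟨j, v⟩
  by_cases h : j = i
  · subst h; simp [vcomp, vincl, proj, LinearMap.funLeft_apply]
  · simp [vincl, proj, h]

theorem arrowMap_eq (x : RepSpace Q d K) (a : Fin Q.numArrows) (m) :
    arrowMap Q d K x a m =
      vincl Q d K (Q.tgt a) ((ptMat Q d x a).mulVec (vcomp Q d K (Q.src a) m)) := by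
  funext ⟨j, v⟩
  by_cases h : j = Q.tgt a
  · subst h
    simp [arrowMap, vincl, vcomp, ptMat, Matrix.mulVec, dotProduct, LinearMap.funLeft_apply]
  · simp [arrowMap, vincl, h]

theorem vincl_injective (i : Fin Q.n) : Function.Injective (vincl Q d K i) :=
  Function.LeftInverse.injective (vcomp_vincl i)

theorem vdim_eq (N : Submodule K (Carrier Q d K)) (i : Fin Q.n) :
    vdim Q d K N i = Module.finrank K (N.map (vcomp Q d K i)) := by
  have : proj Q d K i = vincl Q d K i ∘ₗ vcomp Q d K i := by
    ext1 m; ext1; simp [← vincl_vcomp]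
  unfold vdim
  rw [this, Submodule.map_comp]
  exact (Submodule.equivMapOfInjective _ (vincl_injective i) _).finrank_eq.symm

theorem map_vcomp_eq (N : Submodule K (Carrier Q d K)) (i : Fin Q.n)
    (hN : N.map (proj Q d K i) ≤ N) :
    N.map (vcomp Q d K i) = N.comap (vincl Q d K i) := by
  ext u
  constructor
  · rintro ⟨m, hm, rfl⟩
    rw [Submodule.mem_comap, vincl_vcomp]
    exact hN ⟨m, hm, rfl⟩
  · intro hu
    exact ⟨_, hu, vcomp_vincl i u⟩

theorem filt_of_adapted {L : ℕ} {S : Fin (L+1) → Fin Q.n → ℕ} {lam : ∀ i, Fin (d i) → ℕ}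
    (hlamL : ∀ i v, lam i v < L + 1)
    (hlam : ∀ i (l : Fin (L+1)), Fintype.card {v // lam i v = l} = S l i)
    {x : RepSpace Q d K} (hx : AdaptedFrame Q d lam K (ptMat Q d x)) :
    x ∈ FiltSet Q d K L S := by
  classical
  obtain ⟨g, h, hgh, hz⟩ := hx
  have hhg : ∀ i, h i * g i = 1 := fun i => mul_eq_one_comm.mp (hgh i)
  let T : ∀ (l : ℕ) (i : Fin Q.n), (Fin (d i) → K) →ₗ[K] ({v // lam i v < l} → K) :=
    fun l i => LinearMap.funLeft K K Subtype.val ∘ₗ (h i).mulVecLin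
  have hT : ∀ l i u, u ∈ LinearMap.ker (T l i) ↔ ∀ v, lam i v < l → (h i).mulVec u v = 0 := by
    intro l i u
    rw [LinearMap.mem_ker]
    constructor
    · intro hu v hv
      exact congrFun hu ⟨v, hv⟩
    · intro hu
      funext v
      exact hu v.1 v.2
  have hTfin : ∀ l i, Module.finrank K (LinearMap.ker (T l i)) +
      Fintype.card {v // lam i v < l} = d i := by
    intro l i
    have hsurj : Function.Surjective (T l i) := by
      have hA : Function.Surjective (h i).mulVecLin := ?_
      · intro u
        obtain ⟨u', hu'⟩ :=
          LinearMap.funLeft_surjective_of_injective K K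
            (Subtype.val : {v // lam i v < l} → Fin (d i)) Subtype.val_injective u
        obtain ⟨u'', hu''⟩ := hA u'
        exact ⟨u'', by rw [← hu', ← hu'']; rfl⟩
      intro u
      refine ⟨(g i).mulVec u, ?_⟩
      rw [Matrix.mulVecLin_apply, Matrix.mulVec_mulVec, hhg, Matrix.one_mulVec]
    have := LinearMap.finrank_range_add_finrank_ker (T l i)
    rw [LinearMap.range_eq_top.mpr hsurj, finrank_top] at this
    simp only [Module.finrank_fintype_fun_eq_card, Fintype.card_fin] at this
    omega
  let F : ℕ → Submodule K (Carrier Q d K) := fun l =>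
    ⨅ i, (LinearMap.ker (T l i)).comap (vcomp Q d K i)
  have hF : ∀ l m, m ∈ F l ↔ ∀ i, vcomp Q d K i m ∈ LinearMap.ker (T l i) := by
    intro l m; simp [F, Submodule.mem_iInf]
  have hFincl : ∀ l i u, u ∈ LinearMap.ker (T l i) → vincl Q d K i u ∈ F l := by
    intro l i u hu
    rw [hF]
    intro j
    by_cases hj : j = i
    · subst hj; rw [vcomp_vincl]; exact hu
    · rw [vcomp_vincl_ne hj]; exact Submodule.zero_mem _
  have hFmap : ∀ l i, (F l).map (vcomp Q d K i) = LinearMap.ker (T l i) := by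
    intro l i
    apply le_antisymm
    · rintro _ ⟨m, hm, rfl⟩
      exact (hF l m).mp hm i
    · intro u hu
      exact ⟨_, hFincl l i u hu, vcomp_vincl i u⟩
  refine ⟨fun l => F l, ?_, ?_, ?_, ?_, ?_, ?_⟩
  · rw [eq_top_iff]
    intro m _
    rw [hF]
    intro i
    rw [hT]
    intro v hv
    simp at hv
  · rw [eq_bot_iff]
    intro m hm
    rw [hF] at hm
    rw [Submodule.mem_bot]
    have : ∀ i, vcomp Q d K i m = 0 := by
      intro i
      have h1 : (h i).mulVec (vcomp Q d K i m) = 0 := by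
        funext v
        exact (hT _ _ _).mp (hm i) v (by simpa using hlamL i v)
      have h2 := congrArg (g i).mulVec h1
      rwa [Matrix.mulVec_mulVec, hgh, Matrix.one_mulVec, Matrix.mulVec_zero] at h2
    funext ⟨i, v⟩
    exact congrFun (this i) v
  · intro l m hm
    rw [hF] at hm ⊢
    intro i
    rw [hT]
    intro v hv
    refine (hT _ _ _).mp (hm i) v ?_
    simp at hv ⊢
    omega
  · rintro l i _ ⟨m, hm, rfl⟩
    rw [← vincl_vcomp]
    exact hFincl _ _ _ ((hF _ _).mp hm i)
  · rintro l a _ ⟨m, hm, rfl⟩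
    rw [arrowMap_eq]
    apply hFincl
    rw [hT]
    intro v hv
    set u := vcomp Q d K (Q.src a) m with hu
    have h1 : u = (g (Q.src a)).mulVec ((h (Q.src a)).mulVec u) := by
      rw [Matrix.mulVec_mulVec, hgh, Matrix.one_mulVec]
    rw [h1, Matrix.mulVec_mulVec, Matrix.mulVec_mulVec]
    rw [Matrix.mulVec, dotProduct]
    refine Finset.sum_eq_zero fun w _ => ?_
    by_cases hvw : lam _ v ≤ lam _ w
    · rw [hz a v w hvw, zero_mul]
    · have := (hT _ _ _).mp ((hF _ _).mp hm (Q.src a)) w (by simp at hv ⊢; omega)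
      rw [this, mul_zero]
  · intro l i
    rw [vdim_eq, vdim_eq, hFmap, hFmap, ← hlam i l]
    have h1 := hTfin l i
    have h2 := hTfin (l + 1) i
    have h3 : Fintype.card {v // lam i v < l + 1} =
        Fintype.card {v // lam i v < l} + Fintype.card {v // lam i v = l} := by
      rw [← Fintype.card_subtype_or_disjoint]
      · exact Fintype.card_congr (Equiv.subtypeEquivRight fun v => by omega)
      · rw [Pi.disjoint_iff]
        intro v
        rw [Prop.disjoint_iff]
        rintro ⟨h1, h2⟩
        omega
    simp only [Fin.val_succ, Fin.val_castSucc]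
    omega

theorem adapted_of_filt {L : ℕ} {S : Fin (L+1) → Fin Q.n → ℕ}
    (e : ∀ i, (Σ l : Fin (L + 1), Fin (S l i)) ≃ Fin (d i))
    {x : RepSpace Q d K} (hx : x ∈ FiltSet Q d K L S) :
    AdaptedFrame Q d (fun i v => (((e i).symm v).1 : ℕ)) K (ptMat Q d x) := by
  classical
  obtain ⟨F, h0, hlast, hle, hproj, harr, hdim⟩ := hx
  have hb := fun i => adapted_basis (fun l => (F l).comap (vincl Q d K i)) (fun l => S l i)
    (by simp [h0]) (by
      simp only [hlast]
      exact LinearMap.ker_eq_bot.mpr (vincl_injective i))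
    (fun l => Submodule.comap_mono (hle l)) (fun l => by
      have := hdim l i
      rwa [vdim_eq, vdim_eq, map_vcomp_eq _ _ (hproj _ _), map_vcomp_eq _ _ (hproj _ _)] at this)
    (e i)
  choose b hbW hbr using hb
  have hmul : ∀ i (u : Fin (d i) → K) v,
      ((b i).toMatrix (Pi.basisFun K (Fin (d i)))).mulVec u v = (b i).repr u v := by
    intro i u v
    have := Module.Basis.toMatrix_mulVec_repr (b := Pi.basisFun K (Fin (d i))) (b' := b i) u
    exact congrFun this v
  refine ⟨fun i => (Pi.basisFun K (Fin (d i))).toMatrix (b i),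
    fun i => (b i).toMatrix (Pi.basisFun K (Fin (d i))), fun i => ?_, fun a v w hvw => ?_⟩
  · exact Module.Basis.toMatrix_mul_toMatrix_flip _ _
  · have h1 : ((b (Q.tgt a)).toMatrix (Pi.basisFun K (Fin (d (Q.tgt a)))) * ptMat Q d x a *
        (Pi.basisFun K (Fin (d (Q.src a)))).toMatrix (b (Q.src a))) v w
        = (b (Q.tgt a)).repr ((ptMat Q d x a).mulVec (b (Q.src a) w)) v := by
      rw [← hmul, Matrix.mulVec_mulVec]
      simp [Matrix.mul_apply, Matrix.mulVec, dotProduct, Module.Basis.toMatrix_apply]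
    rw [h1]
    refine hbr (Q.tgt a) ((e (Q.src a)).symm w).1.succ _ ?_ v ?_
    · rw [Submodule.mem_comap]
      have h2 := hbW (Q.src a) w
      rw [Submodule.mem_comap] at h2
      have h3 := harr _ a ⟨_, h2, rfl⟩
      rwa [arrowMap_eq, vcomp_vincl] at h3
    · rw [Fin.val_succ]; exact Nat.lt_succ_of_le hvw

theorem filtSet_closed [IsAlgClosed K] {L : ℕ} {S : Fin (L+1) → Fin Q.n → ℕ}
    (hS : hasDimVec S d) : IsClosed (FiltSet Q d K L S) := by
  classical
  have e : ∀ i, (Σ l : Fin (L + 1), Fin (S l i)) ≃ Fin (d i) := fun i =>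
    Fintype.equivOfCardEq (by simpa using hS i)
  have : FiltSet Q d K L S = {x : RepSpace Q d K |
      AdaptedFrame Q d (fun i v => (((e i).symm v).1 : ℕ)) K (ptMat Q d x)} := by
    ext x
    refine ⟨adapted_of_filt e, fun hx => filt_of_adapted
      (lam := fun i v => (((e i).symm v).1 : ℕ)) (fun i v => Fin.is_lt _) (fun i l => ?_) hx⟩
    rw [← Fintype.card_fin (S l i)]
    refine Fintype.card_congr (Equiv.trans ?_ (Equiv.sigmaSubtype (α := Fin (L+1)) (β := fun l => Fin (S l i)) l))
    exact (e i).symm.subtypeEquiv fun v => by rw [Fin.ext_iff]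
  rw [this]
  exact adapted_closed _

end frames

end QuiverData

/-! ### The radical filtration and upper semicontinuity -/

namespace QuiverData

section final

variable {Q : QuiverData} {d : Fin Q.n → ℕ} {K : Type} [Field K]

theorem vdim_mono {N N' : Submodule K (Carrier Q d K)} (h : N ≤ N') (i : Fin Q.n) :
    vdim Q d K N i ≤ vdim Q d K N' i :=
  Submodule.finrank_mono (Submodule.map_mono h)

theorem radPow_succ_le (x : RepSpace Q d K) (l : ℕ) :
    radPow Q d K x (l + 1) ≤ radPow Q d K x l := by
  refine iSup_le ?_
  rintro ⟨w, hw⟩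
  have hne : w ≠ [] := by rintro rfl; simp at hw
  have hw2 : w = w.dropLast ++ [w.getLast hne] := (List.dropLast_append_getLast hne).symm
  refine le_trans ?_ (le_iSup (fun w : {w : List (Fin Q.numArrows) // w.length = l} =>
    LinearMap.range (wordMap Q d K x w.1)) ⟨w.dropLast, by simp [hw]⟩)
  have : wordMap Q d K x w = wordMap Q d K x w.dropLast * arrowMap Q d K x (w.getLast hne) := by
    conv_lhs => rw [hw2]
    simp [wordMap]
  change LinearMap.range (wordMap Q d K x w) ≤ _
  rw [this]
  exact LinearMap.range_comp_le_range _ _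

theorem radPow_arrow (x : RepSpace Q d K) (l : ℕ) (a : Fin Q.numArrows) :
    (radPow Q d K x l).map (arrowMap Q d K x a) ≤ radPow Q d K x (l + 1) := by
  unfold radPow
  rw [Submodule.map_iSup]
  refine iSup_le ?_
  rintro ⟨w, hw⟩
  refine le_trans ?_ (le_iSup (fun w : {w : List (Fin Q.numArrows) // w.length = l + 1} =>
    LinearMap.range (wordMap Q d K x w.1)) ⟨a :: w, by simp [hw]⟩)
  rw [← LinearMap.range_comp]
  simp [wordMap, Module.End.mul_eq_comp]

theorem radPow_zero (x : RepSpace Q d K) : radPow Q d K x 0 = ⊤ := by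
  rw [eq_top_iff]
  refine le_trans ?_ (le_iSup (fun w : {w : List (Fin Q.numArrows) // w.length = 0} =>
    LinearMap.range (wordMap Q d K x w.1)) ⟨[], rfl⟩)
  simp [wordMap, Module.End.one_eq_id]

theorem proj_arrow (x : RepSpace Q d K) (a : Fin Q.numArrows) (i : Fin Q.n) (m) :
    proj Q d K i (arrowMap Q d K x a m) = arrowMap Q d K x a m ∨
      proj Q d K i (arrowMap Q d K x a m) = 0 := by
  rw [arrowMap_eq, ← vincl_vcomp]
  by_cases h : i = Q.tgt a
  · subst h; rw [vcomp_vincl]; exact Or.inl rfl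
  · rw [vcomp_vincl_ne h, map_zero]; exact Or.inr rfl

theorem radPow_proj (x : RepSpace Q d K) (l : ℕ) (i : Fin Q.n) :
    (radPow Q d K x l).map (proj Q d K i) ≤ radPow Q d K x l := by
  cases l with
  | zero => rw [radPow_zero]; exact le_top
  | succ l =>
    conv_lhs => unfold radPow
    rw [Submodule.map_iSup]
    refine iSup_le ?_
    rintro ⟨w, hw⟩
    have hle := le_iSup (fun w : {w : List (Fin Q.numArrows) // w.length = l + 1} =>
      LinearMap.range (wordMap Q d K x w.1)) ⟨w, hw⟩
    rintro _ ⟨_, ⟨m, rfl⟩, rfl⟩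
    have hmem : wordMap Q d K x w m ∈ radPow Q d K x (l + 1) := hle ⟨m, rfl⟩
    obtain ⟨a, w', rfl⟩ : ∃ a w', w = a :: w' := by
      cases w with
      | nil => simp at hw
      | cons a w' => exact ⟨a, w', rfl⟩
    have h1 : wordMap Q d K x (a :: w') m = arrowMap Q d K x a (wordMap Q d K x w' m) := by
      simp [wordMap]
    change proj Q d K i (wordMap Q d K x (a :: w') m) ∈ _
    rw [h1] at hmem ⊢
    rcases proj_arrow x a i (wordMap Q d K x w' m) with h | h
    · rw [h]; exact hmem
    · rw [h]; exact Submodule.zero_mem _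

theorem rad_filt {L : ℕ} (x : RepSpace Q d K)
    (hx : ∀ w : List (Fin Q.numArrows), w.length = L + 1 → wordMap Q d K x w = 0) :
    x ∈ FiltSet Q d K L (radLayering Q d K L x) := by
  refine ⟨fun l => radPow Q d K x l, radPow_zero x, ?_, fun l => radPow_succ_le x l,
    fun l i => radPow_proj x l i, fun l a => radPow_arrow x l a, fun l i => ?_⟩
  · rw [eq_bot_iff]
    refine iSup_le ?_
    rintro ⟨w, hw⟩
    rw [hx w (by simpa using hw)]
    simp
  · have := vdim_mono (radPow_succ_le x l) i
    simp only [radLayering, Fin.val_succ, Fin.val_castSucc]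
    omega

theorem hasDimVec_of_filt {L : ℕ} {S : Fin (L+1) → Fin Q.n → ℕ} {x : RepSpace Q d K}
    (hx : x ∈ FiltSet Q d K L S) : hasDimVec S d := by
  obtain ⟨F, h0, hlast, -, -, -, hdim⟩ := hx
  intro i
  have key : ∀ k : ℕ, ∀ hk : k ≤ L + 1,
      ∑ l ∈ Finset.univ.filter (fun l : Fin (L+1) => (l : ℕ) < k), S l i +
        vdim Q d K (F ⟨k, by omega⟩) i = vdim Q d K (F 0) i := by
    intro k
    induction k with
    | zero => intro hk; simp
    | succ k ih =>
      intro hk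
      have h1 := ih (by omega)
      have h2 := hdim ⟨k, by omega⟩ i
      have h3 : Finset.univ.filter (fun l : Fin (L+1) => (l : ℕ) < k + 1) =
          insert ⟨k, by omega⟩ (Finset.univ.filter (fun l : Fin (L+1) => (l : ℕ) < k)) := by
        ext l
        simp only [Finset.mem_filter, Finset.mem_univ, true_and, Finset.mem_insert, Fin.ext_iff]
        omega
      rw [h3, Finset.sum_insert (by simp)]
      simp only [Fin.castSucc_mk, Fin.succ_mk] at h2
      omega
  have h1 := key (L + 1) le_rfl
  have h2 : vdim Q d K (F 0) i = d i := by
    rw [h0, vdim_eq, Submodule.map_top,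
      LinearMap.range_eq_top.mpr (fun u => ⟨_, vcomp_vincl i u⟩), finrank_top]
    simp
  have h3 : vdim Q d K (F ⟨L + 1, by omega⟩) i = 0 := by
    rw [show (⟨L + 1, by omega⟩ : Fin (L + 2)) = Fin.last (L + 1) from rfl, hlast]
    simp [vdim]
  rw [h2, h3] at h1
  rw [Finset.filter_true_of_mem (fun l _ => l.is_lt)] at h1
  omega

theorem closed_count {X σ : Type} [TopologicalSpace X] (R : Set σ) (hR : R.Finite)
    (Z : σ → Set X) (hZ : ∀ s ∈ R, IsClosed (Z s)) (m : ℕ) :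
    IsClosed {x : X | m ≤ Set.ncard {s | s ∈ R ∧ x ∈ Z s}} := by
  have : {x : X | m ≤ Set.ncard {s | s ∈ R ∧ x ∈ Z s}} =
      ⋃ T ∈ {T : Set σ | T ⊆ R ∧ m ≤ T.ncard}, ⋂ s ∈ T, Z s := by
    ext x
    simp only [Set.mem_iUnion, Set.mem_iInter, exists_prop]
    constructor
    · intro hx
      exact ⟨{s | s ∈ R ∧ x ∈ Z s}, ⟨fun s hs => hs.1, hx⟩, fun s hs => hs.2⟩
    · rintro ⟨T, ⟨hTR, hT⟩, hxT⟩
      exact le_trans hT (Set.ncard_le_ncard (fun s hs => ⟨hTR hs, hxT s hs⟩)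
        (hR.subset fun s hs => hs.1))
  rw [this]
  refine Set.Finite.isClosed_biUnion ?_ ?_
  · exact hR.finite_subsets.subset fun T hT => hT.1
  · intro T hT
    exact isClosed_biInter fun s hs => hZ s (hT.1 hs)

end final

end QuiverData


open QuiverData in
/-- For an arbitrary basic finite-dimensional algebra `Λ = KQ/I` (with
`J^{L+1} = 0`) and any `d`-dimensional semisimple sequence `S` (realizable or not), the
set `Filt S` is Zariski-closed in `Rep_d(Λ)`; in particular the closure of `Rep S` is
contained in `Filt S`. Consequently `x ↦ Γ(M_x)` is upper semicontinuous. -/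
theorem statement_18 (K : Type) [Field K] [IsAlgClosed K]
    (Q : QuiverData) (L : ℕ) (d : Fin Q.n → ℕ)
    (Rels : Set (FreeAlgebra K (Fin Q.n ⊕ Fin Q.numArrows)))
    (hLoewy : ∀ x ∈ RepVar Q d K Rels, ∀ w : List (Fin Q.numArrows),
      w.length = L + 1 → wordMap Q d K x w = 0)
    (S : Fin (L+1) → Fin Q.n → ℕ) (hS : hasDimVec S d) :
    IsClosed {x : GenV Q d K Rels | x.1 ∈ FiltSet Q d K L S} ∧
    closure {x : GenV Q d K Rels | radLayering Q d K L x.1 = S}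
      ⊆ {x : GenV Q d K Rels | x.1 ∈ FiltSet Q d K L S} ∧
    ∀ m : ℕ, IsClosed {x : GenV Q d K Rels |
        m ≤ gammaCount Q d K L (RepVar Q d K Rels) x.1} := by
  have hcl : ∀ S' : Fin (L+1) → Fin Q.n → ℕ, hasDimVec S' d →
      IsClosed {x : GenV Q d K Rels | x.1 ∈ FiltSet Q d K L S'} := fun S' hS' =>
    (filtSet_closed hS').preimage continuous_subtype_val
  refine ⟨hcl S hS, ?_, fun m => ?_⟩
  · apply closure_minimal _ (hcl S hS)
    intro x hx
    have := rad_filt x.1 (hLoewy x.1 x.2)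
    rwa [show radLayering Q d K L x.1 = S from hx] at this
  · have hdim : ∀ S' : Fin (L+1) → Fin Q.n → ℕ,
        (∃ y ∈ RepVar Q d K Rels, radLayering Q d K L y = S') → hasDimVec S' d := by
      rintro _ ⟨y, hy, rfl⟩
      exact hasDimVec_of_filt (rad_filt y (hLoewy y hy))
    refine closed_count {S' | ∃ y ∈ RepVar Q d K Rels, radLayering Q d K L y = S'} ?_
      (fun S' => {x : GenV Q d K Rels | x.1 ∈ FiltSet Q d K L S'})
      (fun S' hS' => hcl S' (hdim S' hS')) m
    refine (Set.finite_Iic (fun (_ : Fin (L+1)) (i : Fin Q.n) => d i)).subset ?_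
    intro S' hS' l i
    change S' l i ≤ d i
    rw [← hdim S' hS' i]
    exact Finset.single_le_sum (f := fun l => S' l i) (fun _ _ => Nat.zero_le _) (Finset.mem_univ l)
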